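/- arXiv:2407.10478 — 2 statements merged into one kernel-verified Lean document; each statement's English description precedes it below -/
import Mathlib

section
/- Let 2 ≤ k < n, let H ∈ Herm(n) satisfy λ_k(H) < λ_{k+1}(H), and let U be a unitary with U⁻¹HU = diag(λ_1(H),…,λ_n(H)). Then for every K ∈ Herm(n) such that the upper-left k×k block of U⁻¹KU is a real scalar multiple of the k×k identity, tr((H − H_Σ)·K) = 0; i.e., the line joining H and H_Σ is Frobenius-orthogonal to the tangent space of Σ_k at H_Σ. -/
open Matrix

noncomputable section

/-- Sorted eigenvalues (increasing, counted with multiplicity) of a Hermitian matrix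
(junk value for non-Hermitian matrices). -/
def eigs {n : ℕ} (H : Matrix (Fin n) (Fin n) ℂ) : Fin n → ℝ :=
  if hH : H.IsHermitian then hH.eigenvalues ∘ Tuple.sort hH.eigenvalues else fun _ => 0

/-- Mean of the lowest k eigenvalues. -/
def lamBar {n : ℕ} (k : ℕ) (H : Matrix (Fin n) (Fin n) ℂ) : ℝ :=
  (∑ j : Fin n, if (j : ℕ) < k then eigs H j else 0) / k

/-- `Λ_Σ`: the diagonal of sorted eigenvalues, with the lowest k entries replaced
by their mean. -/
def LambdaSigma {n : ℕ} (k : ℕ) (H : Matrix (Fin n) (Fin n) ℂ) : Matrix (Fin n) (Fin n) ℂ :=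
  Matrix.diagonal fun i => if (i : ℕ) < k then (lamBar k H : ℂ) else (eigs H i : ℂ)

/-- **The line joining `H` and `H_Σ` is Frobenius-orthogonal to the tangent space of `Σ_k`
at `H_Σ`:** for every Hermitian `K` whose upper-left `k × k` block in the eigenbasis of `H`
is a real scalar matrix, `tr((H − H_Σ)·K) = 0`. -/
theorem HSigma_orthogonal_tangent {n k : ℕ} (hk2 : 2 ≤ k) (hkn : k < n)
    (H : Matrix (Fin n) (Fin n) ℂ) (hH : H.IsHermitian)
    (hgap : eigs H ⟨k - 1, by omega⟩ < eigs H ⟨k, hkn⟩)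
    (U : Matrix (Fin n) (Fin n) ℂ) (hU : U ∈ Matrix.unitaryGroup (Fin n) ℂ)
    (hdiag : U⁻¹ * H * U = Matrix.diagonal fun i => (eigs H i : ℂ))
    (K : Matrix (Fin n) (Fin n) ℂ) (hK : K.IsHermitian)
    (hKblock : ∃ c : ℝ, ∀ a b : Fin n, (a : ℕ) < k → (b : ℕ) < k →
      (U⁻¹ * K * U) a b = if a = b then (c : ℂ) else 0) :
    Matrix.trace ((H - U * LambdaSigma k H * U⁻¹) * K) = 0 := by
  obtain ⟨c, hc⟩ := hKblock
  have hdet : IsUnit U.det :=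
    (Matrix.isUnit_iff_isUnit_det U).1 ⟨Unitary.toUnits ⟨U, hU⟩, rfl⟩
  have h1 : U * U⁻¹ = 1 := Matrix.mul_nonsing_inv U hdet
  have hHU : H = U * (Matrix.diagonal fun i => (eigs H i : ℂ)) * U⁻¹ := by
    rw [← hdiag]
    calc H = (U * U⁻¹) * H * (U * U⁻¹) := by rw [h1]; simp
      _ = _ := by simp only [Matrix.mul_assoc]
  have key : (H - U * LambdaSigma k H * U⁻¹) * K
      = U * (((Matrix.diagonal fun i => (eigs H i : ℂ)) - LambdaSigma k H) * (U⁻¹ * K)) := by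
    conv_lhs => rw [sub_mul]; arg 1; rw [hHU]
    simp only [Matrix.mul_sub, Matrix.sub_mul, Matrix.mul_assoc]
  rw [key, Matrix.trace_mul_comm, Matrix.mul_assoc, LambdaSigma, Matrix.diagonal_sub,
    Matrix.trace]
  simp only [Matrix.diag_apply, Matrix.diagonal_mul]
  have hterm : ∀ i : Fin n, ((eigs H i : ℂ) - if (i : ℕ) < k then (lamBar k H : ℂ)
      else (eigs H i : ℂ)) * (U⁻¹ * K * U) i i
      = c * ((if (i : ℕ) < k then (eigs H i : ℂ) else 0)
        - lamBar k H * (if (i : ℕ) < k then 1 else 0)) := by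
    intro i
    by_cases hi : (i : ℕ) < k
    · rw [hc i i hi hi]; simp [hi]; ring
    · simp [hi]
  rw [Finset.sum_congr rfl (fun i _ => hterm i), ← Finset.mul_sum, Finset.sum_sub_distrib,
    ← Finset.mul_sum]
  have hcard : (∑ i : Fin n, if (i : ℕ) < k then (1 : ℂ) else 0) = k := by
    rw [Fin.sum_univ_eq_sum_range (fun i => if i < k then (1 : ℂ) else 0) n,
      ← Finset.sum_filter]
    have : (Finset.range n).filter (fun i => i < k) = Finset.range k := by
      ext i; simp; omega
    rw [this]; simp
  have hk0 : (k : ℂ) ≠ 0 := by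
    have : k ≠ 0 := by omega
    exact_mod_cast this
  rw [hcard, lamBar]
  push_cast
  rw [div_mul_cancel₀ _ hk0]
  simp only [apply_ite Complex.ofReal, Complex.ofReal_zero, sub_self, mul_zero]

end
end

section
/- Let 2 ≤ k < n, let H₀ ∈ Σ_k be a real diagonal matrix with its diagonal entries in increasing order, and let H₁ ∈ Herm(n). Then the function g(t) = d(H₀ + t·H₁, Σ_k)² is real-analytic in a neighborhood of 0, and: if the upper-left k×k block of H₁ is a real scalar multiple of the k×k identity (i.e., H₁ is tangent to Σ_k at H₀), then ord₀(g) ≥ 4; otherwise ord₀(g) = 2. Equivalently, the order of energy splitting of the linear family H₀ + t·H₁ is 1 if H₁ is not tangent to Σ_k at H₀, and at least 2 if it is. -/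
open Matrix

noncomputable section

/-- Frobenius norm of a complex matrix. -/
def frobNorm {n : ℕ} (M : Matrix (Fin n) (Fin n) ℂ) : ℝ :=
  Real.sqrt (∑ a, ∑ b, ‖M a b‖ ^ 2)

/-- The set Σ_k of k-fold ground-state degenerate Hermitian matrices:
λ₁ = … = λ_k < λ_{k+1}. -/
def SigmaSet (n k : ℕ) : Set (Matrix (Fin n) (Fin n) ℂ) :=
  {H | H.IsHermitian ∧ (∀ i j : Fin n, (i : ℕ) < k → (j : ℕ) < k → eigs H i = eigs H j) ∧
    ∀ i j : Fin n, (i : ℕ) < k → (j : ℕ) = k → eigs H i < eigs H j}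

/-- Order of vanishing of a function at `0 ∈ ℝ`. -/
def ord0 (f : ℝ → ℝ) : ℕ∞ :=
  sInf {m : ℕ∞ | ∃ j : ℕ, m = (j : ℕ∞) ∧ iteratedDeriv j f 0 ≠ 0}

def frobSq {n : ℕ} (M : Matrix (Fin n) (Fin n) ℂ) : ℝ := ∑ a, ∑ b, ‖M a b‖ ^ 2

lemma frobNorm_sq {n : ℕ} (M : Matrix (Fin n) (Fin n) ℂ) : frobNorm M ^ 2 = frobSq M := by
  unfold frobNorm frobSq
  exact Real.sq_sqrt (by positivity)

lemma frobSq_trace {n : ℕ} (M : Matrix (Fin n) (Fin n) ℂ) :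
    ((frobSq M : ℝ) : ℂ) = (Mᴴ * M).trace := by
  unfold frobSq
  rw [Finset.sum_comm]
  simp only [Matrix.trace, Matrix.diag, Matrix.mul_apply, Matrix.conjTranspose_apply]
  push_cast
  refine Finset.sum_congr rfl fun a _ => Finset.sum_congr rfl fun b _ => ?_
  have := Complex.conj_mul' (M b a)
  simpa using this.symm

lemma frobSq_unitary {n : ℕ} (M U V : Matrix (Fin n) (Fin n) ℂ) (hU : U * Uᴴ = 1)
    (hV : V * Vᴴ = 1) : frobSq (Uᴴ * M * V) = frobSq M := by
  have h : ((frobSq (Uᴴ * M * V) : ℝ) : ℂ) = ((frobSq M : ℝ) : ℂ) := by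
    rw [frobSq_trace, frobSq_trace]
    have : (Uᴴ * M * V)ᴴ * (Uᴴ * M * V) = Vᴴ * (Mᴴ * (U * Uᴴ) * M * V) := by
      simp only [Matrix.conjTranspose_mul, Matrix.conjTranspose_conjTranspose, Matrix.mul_assoc]
    rw [this, Matrix.trace_mul_comm, hU, Matrix.mul_assoc _ V, hV]
    simp
  exact_mod_cast h

structure Dec {n : ℕ} (H U : Matrix (Fin n) (Fin n) ℂ) (a : Fin n → ℝ) : Prop where
  uu : Uᴴ * U = 1
  eq : H = U * Matrix.diagonal (fun i => (a i : ℂ)) * Uᴴ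

lemma Dec.uu' {n : ℕ} {H U : Matrix (Fin n) (Fin n) ℂ} {a : Fin n → ℝ} (h : Dec H U a) :
    U * Uᴴ = 1 := mul_eq_one_comm.mp h.uu

lemma Dec.frob {n : ℕ} {H U G V : Matrix (Fin n) (Fin n) ℂ} {a b : Fin n → ℝ} (h : Dec H U a)
    (h' : Dec G V b) : frobSq (H - G) = ∑ i, ∑ j, (a i - b j) ^ 2 * ‖(Uᴴ * V) i j‖ ^ 2 := by
  rw [← frobSq_unitary (H - G) U V h.uu' h'.uu']
  have e : Uᴴ * (H - G) * V = Matrix.diagonal (fun i => (a i : ℂ)) * (Uᴴ * V) -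
      (Uᴴ * V) * Matrix.diagonal (fun i => (b i : ℂ)) := by
    rw [Matrix.mul_sub, Matrix.sub_mul]
    congr 1
    · rw [h.eq]
      simp only [← Matrix.mul_assoc]
      rw [h.uu, Matrix.one_mul]
    · rw [h'.eq]
      simp only [Matrix.mul_assoc]
      rw [h'.uu, Matrix.mul_one]
  rw [e]
  unfold frobSq
  refine Finset.sum_congr rfl fun i _ => Finset.sum_congr rfl fun j _ => ?_
  rw [Matrix.sub_apply, Matrix.diagonal_mul, Matrix.mul_diagonal]
  have : (a i : ℂ) * (Uᴴ * V) i j - (Uᴴ * V) i j * (b j : ℂ) =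
    ((a i - b j : ℝ) : ℂ) * (Uᴴ * V) i j := by push_cast; ring
  rw [this, norm_mul, mul_pow, Complex.norm_real, Real.norm_eq_abs, sq_abs]

lemma unitary_row {n : ℕ} (W : Matrix (Fin n) (Fin n) ℂ) (h : W * Wᴴ = 1) (i : Fin n) :
    ∑ j, ‖W i j‖ ^ 2 = 1 := by
  have := congrFun (congrFun h i) i
  rw [Matrix.mul_apply] at this
  simp only [Matrix.conjTranspose_apply, Matrix.one_apply_eq] at this
  have h2 : ((∑ j, ‖W i j‖ ^ 2 : ℝ) : ℂ) = 1 := by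
    rw [← this]; push_cast
    exact Finset.sum_congr rfl fun j _ => (Complex.mul_conj' (W i j)).symm
  exact_mod_cast h2

lemma unitary_col {n : ℕ} (W : Matrix (Fin n) (Fin n) ℂ) (h : Wᴴ * W = 1) (j : Fin n) :
    ∑ i, ‖W i j‖ ^ 2 = 1 := by
  have := unitary_row Wᴴ (by simpa using h) j
  simpa [Matrix.conjTranspose_apply] using this

lemma ds_ineq {n : ℕ} (a b : Fin n → ℝ) (ha : Monotone a) (hb : Monotone b)
    (D : Matrix (Fin n) (Fin n) ℝ) (hD : D ∈ doublyStochastic ℝ (Fin n)) :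
    ∑ i, (a i - b i) ^ 2 ≤ ∑ i, ∑ j, (a i - b j) ^ 2 * D i j := by
  obtain ⟨w, hw, hw1, rfl⟩ := exists_eq_sum_perm_of_mem_doublyStochastic hD
  have key : ∀ σ : Equiv.Perm (Fin n), ∑ i, (a i - b i) ^ 2 ≤
      ∑ i, ∑ j, (a i - b j) ^ 2 * (σ.permMatrix ℝ) i j := by
    intro σ
    have h1 : ∑ i, ∑ j, (a i - b j) ^ 2 * (σ.permMatrix ℝ) i j = ∑ i, (a i - b (σ i)) ^ 2 := by
      refine Finset.sum_congr rfl fun i _ => ?_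
      simp [Equiv.Perm.permMatrix, PEquiv.toMatrix_apply, Equiv.toPEquiv_apply]
    rw [h1]
    have h2 := (ha.monovary hb).sum_mul_comp_perm_le_sum_mul (σ := σ)
    have h3 : ∑ i, b (σ i) ^ 2 = ∑ i, b i ^ 2 := Equiv.sum_comp σ (fun i => b i ^ 2)
    have e1 : ∀ c : Fin n → ℝ, ∑ i, (a i - c i) ^ 2 =
        ∑ i, a i ^ 2 - 2 * ∑ i, a i * c i + ∑ i, c i ^ 2 := by
      intro c
      rw [Finset.mul_sum, ← Finset.sum_sub_distrib, ← Finset.sum_add_distrib]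
      exact Finset.sum_congr rfl fun i _ => by ring
    have e2 := e1 (fun i => b (σ i))
    rw [e1, e2, h3]
    linarith
  have h4 : ∑ i, ∑ j, (a i - b j) ^ 2 * (∑ σ, w σ • σ.permMatrix ℝ) i j =
      ∑ σ, w σ * ∑ i, ∑ j, (a i - b j) ^ 2 * (σ.permMatrix ℝ) i j := by
    simp only [Matrix.sum_apply, Matrix.smul_apply, smul_eq_mul, Finset.mul_sum]
    rw [Finset.sum_comm' (t' := Finset.univ) (s' := fun _ => Finset.univ) (by simp)]
    conv_lhs =>
      enter [2, j]
      rw [Finset.sum_comm]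
    rw [Finset.sum_comm]
    refine Finset.sum_congr rfl fun σ _ => ?_
    rw [Finset.sum_comm]
    exact Finset.sum_congr rfl fun i _ => Finset.sum_congr rfl fun j _ => by ring
  rw [h4]
  calc ∑ i, (a i - b i) ^ 2 = ∑ σ, w σ * ∑ i, (a i - b i) ^ 2 := by
        rw [← Finset.sum_mul, hw1, one_mul]
    _ ≤ _ := Finset.sum_le_sum fun σ _ => mul_le_mul_of_nonneg_left (key σ) (hw σ)

lemma hoffman_wielandt {n : ℕ} {H U G V : Matrix (Fin n) (Fin n) ℂ} {a b : Fin n → ℝ}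
    (h : Dec H U a) (h' : Dec G V b) (ha : Monotone a) (hb : Monotone b) :
    ∑ i, (a i - b i) ^ 2 ≤ frobSq (H - G) := by
  rw [h.frob h']
  have h1 : (Uᴴ * V) * (Uᴴ * V)ᴴ = 1 := by
    rw [Matrix.conjTranspose_mul, Matrix.conjTranspose_conjTranspose, Matrix.mul_assoc,
      ← Matrix.mul_assoc V, h'.uu', Matrix.one_mul, h.uu]
  refine ds_ineq a b ha hb (Matrix.of fun i j => ‖(Uᴴ * V) i j‖ ^ 2) ?_
  rw [mem_doublyStochastic_iff_sum]
  refine ⟨fun i j => by simp only [Matrix.of_apply]; positivity, fun i => ?_, fun j => ?_⟩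
  · exact unitary_row _ h1 i
  · exact unitary_col _ (mul_eq_one_comm.mp h1) j

lemma eigs_mono {n : ℕ} (H : Matrix (Fin n) (Fin n) ℂ) : Monotone (eigs H) := by
  unfold eigs
  split_ifs with h
  · exact Tuple.monotone_sort _
  · exact monotone_const

lemma exists_dec {n : ℕ} (H : Matrix (Fin n) (Fin n) ℂ) (hH : H.IsHermitian) :
    ∃ U, Dec H U (eigs H) := by
  set σ := Tuple.sort hH.eigenvalues with hσ
  set V : Matrix (Fin n) (Fin n) ℂ := (hH.eigenvectorUnitary : Matrix (Fin n) (Fin n) ℂ) with hV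
  have hVV : Vᴴ * V = 1 := by
    have := (Unitary.mem_iff.mp hH.eigenvectorUnitary.2).1
    simpa [Matrix.star_eq_conjTranspose] using this
  have hHV : H = V * Matrix.diagonal (fun i => (hH.eigenvalues i : ℂ)) * Vᴴ := by
    have := hH.spectral_theorem
    rw [Unitary.conjStarAlgAut_apply] at this
    exact this
  refine ⟨V.submatrix id σ, ?_, ?_⟩
  · rw [Matrix.conjTranspose_submatrix, Matrix.submatrix_mul _ _ _ _ _ Function.bijective_id |>.symm, hVV]
    simp
  · have e : eigs H = hH.eigenvalues ∘ σ := by simp [eigs, hH, hσ]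
    have e2 : Matrix.diagonal (fun i => (eigs H i : ℂ)) =
        (Matrix.diagonal (fun i => (hH.eigenvalues i : ℂ))).submatrix σ σ := by
      rw [Matrix.submatrix_diagonal_equiv, e]; rfl
    rw [e2, Matrix.conjTranspose_submatrix, Matrix.submatrix_mul_equiv, Matrix.submatrix_mul_equiv]
    simpa using hHV

lemma eigs_unique {n : ℕ} {H U : Matrix (Fin n) (Fin n) ℂ} {a : Fin n → ℝ} (hH : H.IsHermitian)
    (h : Dec H U a) (ha : Monotone a) : eigs H = a := by
  obtain ⟨V, hV⟩ := exists_dec H hH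
  have := hoffman_wielandt hV h (eigs_mono H) ha
  rw [sub_self] at this
  have h0 : frobSq (0 : Matrix (Fin n) (Fin n) ℂ) = 0 := by simp [frobSq]
  rw [h0] at this
  have h1 := (Finset.sum_eq_zero_iff_of_nonneg (fun i _ => sq_nonneg _)).mp
    (le_antisymm this (Finset.sum_nonneg fun i _ => sq_nonneg (eigs H i - a i)))
  funext i
  have := h1 i (Finset.mem_univ i)
  exact sub_eq_zero.mp (pow_eq_zero_iff (two_ne_zero) |>.mp this)

lemma Dec.herm {n : ℕ} {H U : Matrix (Fin n) (Fin n) ℂ} {a : Fin n → ℝ} (h : Dec H U a) :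
    H.IsHermitian := by
  rw [h.eq]
  apply Matrix.isHermitian_mul_mul_conjTranspose
  rw [Matrix.IsHermitian, Matrix.diagonal_conjTranspose]
  congr 1
  funext i
  simp

/-- low index set -/
def lowS (n k : ℕ) : Finset (Fin n) := Finset.univ.filter (fun i => (i : ℕ) < k)

lemma lowS_card {n k : ℕ} (h : k < n) : (lowS n k).card = k := by
  unfold lowS
  rw [Fin.card_filter_val_lt]
  omega

lemma mem_lowS {n k : ℕ} {i : Fin n} : i ∈ lowS n k ↔ (i : ℕ) < k := by simp [lowS]

def mean {n : ℕ} (k : ℕ) (a : Fin n → ℝ) : ℝ := (∑ i ∈ lowS n k, a i) / k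

def spread {n : ℕ} (k : ℕ) (a : Fin n → ℝ) : ℝ :=
  ∑ i ∈ lowS n k, a i ^ 2 - (∑ i ∈ lowS n k, a i) ^ 2 / k

lemma spread_eq {n k : ℕ} (hk : 0 < k) (h : k < n) (a : Fin n → ℝ) (μ : ℝ) :
    ∑ i ∈ lowS n k, (a i - μ) ^ 2 = spread k a + k * (mean k a - μ) ^ 2 := by
  have : ∑ i ∈ lowS n k, (a i - μ) ^ 2 =
      ∑ i ∈ lowS n k, a i ^ 2 - 2 * μ * ∑ i ∈ lowS n k, a i + k * μ ^ 2 := by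
    rw [Finset.mul_sum, ← Finset.sum_sub_distrib]
    have hc : (k : ℝ) * μ ^ 2 = ∑ i ∈ lowS n k, μ ^ 2 := by simp [lowS_card h]
    rw [hc, ← Finset.sum_add_distrib]
    exact Finset.sum_congr rfl fun i _ => by ring
  rw [this, spread, mean]
  have : (k : ℝ) ≠ 0 := by positivity
  field_simp
  ring

lemma spread_le {n k : ℕ} (hk : 0 < k) (h : k < n) (a : Fin n → ℝ) (μ : ℝ) :
    spread k a ≤ ∑ i ∈ lowS n k, (a i - μ) ^ 2 := by
  rw [spread_eq hk h]
  have : 0 ≤ (k : ℝ) * (mean k a - μ) ^ 2 := by positivity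
  linarith

lemma spread_mean {n k : ℕ} (hk : 0 < k) (h : k < n) (a : Fin n → ℝ) :
    spread k a = ∑ i ∈ lowS n k, (a i - mean k a) ^ 2 := by
  rw [spread_eq hk h]; simp

lemma dist_eq {n k : ℕ} (hk : 0 < k) (hkn : k < n) (H : Matrix (Fin n) (Fin n) ℂ)
    (hH : H.IsHermitian) (hg : ∀ i j : Fin n, (i : ℕ) < k → (j : ℕ) = k → eigs H i < eigs H j) :
    (sInf ((fun G => frobNorm (H - G)) '' SigmaSet n k)) ^ 2 = spread k (eigs H) := by
  have hs0 : 0 ≤ spread k (eigs H) := by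
    rw [spread_mean hk hkn]; positivity
  have hleast : IsLeast ((fun G => frobNorm (H - G)) '' SigmaSet n k)
      (Real.sqrt (spread k (eigs H))) := by
    constructor
    · obtain ⟨U, hU⟩ := exists_dec H hH
      set m := mean k (eigs H) with hm
      set b : Fin n → ℝ := fun i => if (i : ℕ) < k then m else eigs H i with hb
      have hmlt : ∀ j : Fin n, k ≤ (j : ℕ) → m < eigs H j := by
        intro j hj
        have h1 : ∑ i ∈ lowS n k, eigs H i < ∑ i ∈ lowS n k, eigs H j := by
          apply Finset.sum_lt_sum_of_nonempty
          · rw [← Finset.card_pos, lowS_card hkn]; exact hk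
          · intro i hi
            exact lt_of_lt_of_le (hg i ⟨k, hkn⟩ (mem_lowS.mp hi) rfl) (eigs_mono H hj)
        rw [Finset.sum_const, lowS_card hkn, nsmul_eq_mul] at h1
        rw [hm, mean, div_lt_iff₀ (by positivity)]
        linarith
      have hbm : Monotone b := by
        intro i j hij
        have hij' : (i : ℕ) ≤ j := hij
        simp only [hb]
        split_ifs with h1 h2 h2
        · exact le_refl _
        · exact (hmlt j (by omega)).le
        · omega
        · exact eigs_mono H hij
      have hdG : Dec (U * Matrix.diagonal (fun i => (b i : ℂ)) * Uᴴ) U b := ⟨hU.uu, rfl⟩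
      set G := U * Matrix.diagonal (fun i => (b i : ℂ)) * Uᴴ with hG
      have heG := eigs_unique hdG.herm hdG hbm
      refine ⟨G, ⟨hdG.herm, ?_, ?_⟩, ?_⟩
      · intro i j hi hj
        simp [heG, hb, hi, hj]
      · intro i j hi hj
        simp [heG, hb, hi, hj]
        exact hmlt j hj.ge
      · simp only
        have h2 : frobNorm (H - G) ^ 2 = spread k (eigs H) := by
          rw [frobNorm_sq, hU.frob hdG, hU.uu, spread_mean hk hkn]
          rw [lowS, Finset.sum_filter]
          refine Finset.sum_congr rfl fun i _ => ?_
          rw [Finset.sum_eq_single i]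
          · simp only [Matrix.one_apply_eq, hb]
            split_ifs <;> simp [hm]
          · intro j _ hj
            simp [Matrix.one_apply_ne hj.symm]
          · simp
        rw [← h2]
        exact (Real.sqrt_sq (Real.sqrt_nonneg _)).symm
    · rintro _ ⟨G, ⟨hG, hG1, hG2⟩, rfl⟩
      obtain ⟨U, hU⟩ := exists_dec H hH
      obtain ⟨V, hV⟩ := exists_dec G hG
      have hw := hoffman_wielandt hU hV (eigs_mono H) (eigs_mono G)
      apply Real.sqrt_le_sqrt
      refine le_trans ?_ hw
      refine (spread_le hk hkn (eigs H) (eigs G ⟨0, by omega⟩)).trans ?_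
      calc ∑ i ∈ lowS n k, (eigs H i - eigs G ⟨0, by omega⟩) ^ 2
          = ∑ i ∈ lowS n k, (eigs H i - eigs G i) ^ 2 :=
            Finset.sum_congr rfl fun i hi => by
              rw [hG1 ⟨0, by omega⟩ i hk (mem_lowS.mp hi)]
        _ ≤ _ := Finset.sum_le_sum_of_subset_of_nonneg (Finset.subset_univ _)
            fun i _ _ => sq_nonneg _
  rw [hleast.csInf_eq, Real.sq_sqrt hs0]

open Topology Filter Metric

lemma param_circle (f : ℂ × ℂ → ℂ) (c : ℂ) (R ε : ℝ) (hR : 0 ≤ R)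
    (hf : ∀ t ∈ ball (0:ℂ) ε, ∀ z ∈ sphere c R, AnalyticAt ℂ f (t, z)) :
    DifferentiableOn ℂ (fun t => ∮ z in C(c, R), f (t, z)) (ball 0 ε) := by
  intro t0 ht0
  refine DifferentiableAt.differentiableWithinAt ?_
  obtain ⟨r, hr, hrs⟩ := nhds_basis_closedBall.mem_iff.mp (isOpen_ball.mem_nhds ht0)
  have hcont : ∀ t ∈ closedBall t0 r, Continuous fun θ : ℝ => f (t, circleMap c R θ) := by
    intro t ht
    rw [continuous_iff_continuousAt]
    intro θ
    have h1 := (hf t (hrs ht) _ (circleMap_mem_sphere c hR θ)).continuousAt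
    exact ContinuousAt.comp (f := fun θ : ℝ => (t, circleMap c R θ)) h1 (by fun_prop)
  have hcont' : ContinuousOn (fun p : ℂ × ℂ => fderiv ℂ f p (1, 0))
      (closedBall t0 r ×ˢ sphere c R) := by
    rintro ⟨t, z⟩ ⟨ht, hz⟩
    have h1 := (hf t (hrs ht) z hz).fderiv.continuousAt
    exact (h1.clm_apply continuousAt_const).continuousWithinAt
  obtain ⟨M, hM⟩ := ((isCompact_closedBall t0 r).prod (isCompact_sphere c R)).exists_bound_of_continuousOn hcont'
  have hdc : Continuous fun θ : ℝ => deriv (circleMap c R) θ := by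
    simp only [deriv_circleMap]; fun_prop
  have key := (intervalIntegral.hasDerivAt_integral_of_dominated_loc_of_deriv_le
    (μ := MeasureTheory.volume) (a := 0) (b := 2 * Real.pi) (𝕜 := ℂ)
    (F := fun t θ => deriv (circleMap c R) θ • f (t, circleMap c R θ))
    (F' := fun t θ => deriv (circleMap c R) θ • fderiv ℂ f (t, circleMap c R θ) (1, 0))
    (x₀ := t0) (s := ball t0 r) (bound := fun _ => R * M) (ball_mem_nhds t0 hr) ?_ ?_ ?_ ?_ ?_ ?_).2
  · exact key.differentiableAt
  · filter_upwards [ball_mem_nhds t0 hr] with t ht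
    exact (hdc.smul (hcont t (ball_subset_closedBall ht))).aestronglyMeasurable
  · exact (hdc.smul (hcont t0 (mem_closedBall_self hr.le))).intervalIntegrable _ _
  · refine Continuous.aestronglyMeasurable (hdc.smul ?_)
    exact hcont'.comp_continuous (f := fun θ : ℝ => (t0, circleMap c R θ)) (by fun_prop)
      (fun θ => ⟨mem_closedBall_self hr.le, circleMap_mem_sphere c hR θ⟩)
  · refine Eventually.of_forall fun θ _ t ht => ?_
    rw [norm_smul]
    have h1 : ‖deriv (circleMap c R) θ‖ = R := by
      simp [deriv_circleMap, abs_of_nonneg hR]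
    rw [h1]
    exact mul_le_mul_of_nonneg_left
      (hM _ ⟨ball_subset_closedBall ht, circleMap_mem_sphere c hR θ⟩) hR
  · simp
  · refine Eventually.of_forall fun θ _ t ht => ?_
    have h1 := (hf t (hrs (ball_subset_closedBall ht)) _ (circleMap_mem_sphere c hR θ)).differentiableAt.hasFDerivAt
    have h2 : HasDerivAt (fun t : ℂ => (t, circleMap c R θ)) ((1 : ℂ), (0 : ℂ)) t :=
      (hasDerivAt_id t).prodMk (hasDerivAt_const t _)
    exact (h1.comp_hasDerivAt t h2).const_smul (deriv (circleMap c R) θ)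

lemma analyticAt_det {n : ℕ} (A : ℂ × ℂ → Matrix (Fin n) (Fin n) ℂ) (p : ℂ × ℂ)
    (h : ∀ i j, AnalyticAt ℂ (fun q => A q i j) p) : AnalyticAt ℂ (fun q => (A q).det) p := by
  simp only [Matrix.det_apply']
  refine Finset.analyticAt_fun_sum _ fun σ _ => ?_
  refine analyticAt_const.mul ?_
  exact Finset.analyticAt_fun_prod _ fun i _ => h _ _

def resM {n : ℕ} (H₀ H₁ : Matrix (Fin n) (Fin n) ℂ) (p : ℂ × ℂ) : Matrix (Fin n) (Fin n) ℂ :=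
  p.2 • 1 - (H₀ + p.1 • H₁)

lemma resM_an {n : ℕ} (H₀ H₁ : Matrix (Fin n) (Fin n) ℂ) (p : ℂ × ℂ) (i j : Fin n) :
    AnalyticAt ℂ (fun q => resM H₀ H₁ q i j) p := by
  simp only [resM, Matrix.sub_apply, Matrix.add_apply, Matrix.smul_apply, smul_eq_mul]
  exact (analyticAt_snd.mul analyticAt_const).sub
    (analyticAt_const.add (analyticAt_fst.mul analyticAt_const))

lemma resM_trace_an {n : ℕ} (H₀ H₁ : Matrix (Fin n) (Fin n) ℂ) (p : ℂ × ℂ)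
    (h : (resM H₀ H₁ p).det ≠ 0) : AnalyticAt ℂ (fun q => ((resM H₀ H₁ q)⁻¹).trace) p := by
  have e : (fun q => ((resM H₀ H₁ q)⁻¹).trace) = fun q =>
      ((resM H₀ H₁ q).det)⁻¹ * ∑ i, (resM H₀ H₁ q).adjugate i i := by
    funext q
    rw [Matrix.inv_def, Matrix.trace_smul, smul_eq_mul, Ring.inverse_eq_inv']
    rfl
  rw [e]
  refine AnalyticAt.mul ((analyticAt_det _ p (resM_an H₀ H₁ p)).inv h) ?_
  refine Finset.analyticAt_fun_sum _ fun i _ => ?_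
  simp only [Matrix.adjugate_apply]
  refine analyticAt_det _ p fun a b => ?_
  simp only [Matrix.updateRow_apply]
  split_ifs
  · exact analyticAt_const
  · exact resM_an H₀ H₁ p a b

lemma exists_radius {n : ℕ} (H₀ H₁ : Matrix (Fin n) (Fin n) ℂ) (c : ℂ) (R : ℝ)
    (h : ∀ z ∈ sphere c R, (resM H₀ H₁ (0, z)).det ≠ 0) :
    ∃ ε > 0, ∀ t ∈ ball (0:ℂ) ε, ∀ z ∈ sphere c R, (resM H₀ H₁ (t, z)).det ≠ 0 := by
  have := (isCompact_sphere c R).eventually_forall_of_forall_eventually (x₀ := (0:ℂ))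
    (P := fun t z => (resM H₀ H₁ (t, z)).det ≠ 0) ?_
  · exact Metric.eventually_nhds_iff_ball.mp this
  · intro z hz
    have := (analyticAt_det _ (0, z) (resM_an H₀ H₁ (0, z))).continuousAt.eventually_ne (h z hz)
    exact this

lemma dec_trace {n : ℕ} {H U : Matrix (Fin n) (Fin n) ℂ} {a : Fin n → ℝ} (h : Dec H U a) (z : ℂ)
    (hz : ∀ i, z - (a i : ℂ) ≠ 0) :
    ((z • (1 : Matrix (Fin n) (Fin n) ℂ) - H)⁻¹).trace = ∑ i, (z - (a i : ℂ))⁻¹ := by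
  have e : (z • (1 : Matrix (Fin n) (Fin n) ℂ) - H) =
      U * Matrix.diagonal (fun i => z - (a i : ℂ)) * Uᴴ := by
    have : Matrix.diagonal (fun i => z - (a i : ℂ)) =
      z • (1 : Matrix (Fin n) (Fin n) ℂ) - Matrix.diagonal (fun i => (a i : ℂ)) := by
      ext i j
      by_cases hij : i = j
      · subst hij; simp
      · simp [hij]
    rw [this, Matrix.mul_sub, Matrix.sub_mul, ← h.eq, Matrix.mul_smul, Matrix.mul_one,
      Matrix.smul_mul, h.uu']
  have e2 : (z • (1 : Matrix (Fin n) (Fin n) ℂ) - H)⁻¹ =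
      U * Matrix.diagonal (fun i => (z - (a i : ℂ))⁻¹) * Uᴴ := by
    apply Matrix.inv_eq_right_inv
    rw [e]
    have : U * Matrix.diagonal (fun i => z - (a i : ℂ)) * Uᴴ *
      (U * Matrix.diagonal (fun i => (z - (a i : ℂ))⁻¹) * Uᴴ) =
      U * (Matrix.diagonal (fun i => z - (a i : ℂ)) * (Uᴴ * U) *
       Matrix.diagonal (fun i => (z - (a i : ℂ))⁻¹)) * Uᴴ := by
      simp only [Matrix.mul_assoc]
    rw [this, h.uu, Matrix.mul_one, Matrix.diagonal_mul_diagonal]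
    simp only [mul_inv_cancel₀ (hz _)]
    rw [Matrix.diagonal_one, Matrix.mul_one, h.uu']
  rw [e2, Matrix.trace_mul_comm, ← Matrix.mul_assoc, h.uu, Matrix.one_mul, Matrix.trace_diagonal]

lemma circ_in (c : ℂ) (R : ℝ) (w : ℂ) (hw : w ∈ ball c R) (j : ℕ) :
    ∮ z in C(c, R), z ^ j * (z - w)⁻¹ = 2 * Real.pi * Complex.I * w ^ j := by
  have := DifferentiableOn.circleIntegral_sub_inv_smul (f := fun z : ℂ => z ^ j) (c := c) (R := R)
    (by fun_prop) hw
  simp only [smul_eq_mul] at this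
  rw [← this]
  congr 1
  funext z
  ring

lemma circ_out (c : ℂ) (R : ℝ) (hR : 0 ≤ R) (w : ℂ) (hw : w ∉ closedBall c R) (j : ℕ) :
    ∮ z in C(c, R), z ^ j * (z - w)⁻¹ = 0 := by
  have hd : ∀ z ∈ closedBall c R, DifferentiableAt ℂ (fun z => z ^ j * (z - w)⁻¹) z := by
    intro z hz
    have : z - w ≠ 0 := sub_ne_zero.mpr (fun h => hw (h ▸ hz))
    fun_prop (disch := assumption)
  apply Complex.circleIntegral_eq_zero_of_differentiable_on_off_countable hR Set.countable_empty
  · exact fun z hz => (hd z hz).continuousAt.continuousWithinAt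
  · exact fun z hz => hd z (ball_subset_closedBall hz.1)

lemma power_sum {n k : ℕ} {H U : Matrix (Fin n) (Fin n) ℂ} {a : Fin n → ℝ} (h : Dec H U a)
    (c R : ℝ) (hR : 0 < R) (hin : ∀ i : Fin n, (i : ℕ) < k → |a i - c| < R)
    (hout : ∀ i : Fin n, k ≤ (i : ℕ) → R < |a i - c|) (j : ℕ) :
    ∮ z in C((c : ℂ), R), z ^ j * ((z • (1 : Matrix (Fin n) (Fin n) ℂ) - H)⁻¹).trace =
      2 * Real.pi * Complex.I * ((∑ i ∈ lowS n k, a i ^ j : ℝ) : ℂ) := by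
  have hn : ∀ i, ‖(a i : ℂ) - (c : ℂ)‖ = |a i - c| := fun i => by
    rw [← Complex.ofReal_sub, Complex.norm_real, Real.norm_eq_abs]
  have hne : ∀ z ∈ sphere (c : ℂ) R, ∀ i, z - (a i : ℂ) ≠ 0 := by
    intro z hz i h0
    rw [sub_eq_zero] at h0
    rw [mem_sphere, dist_eq_norm, h0, hn] at hz
    rcases lt_or_ge (i : ℕ) k with hi | hi
    · exact absurd hz (hin i hi).ne
    · exact absurd hz (hout i hi).ne'
  have e1 : ∮ z in C((c : ℂ), R), z ^ j * ((z • (1 : Matrix (Fin n) (Fin n) ℂ) - H)⁻¹).trace =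
      ∮ z in C((c : ℂ), R), ∑ i, z ^ j * (z - (a i : ℂ))⁻¹ := by
    apply circleIntegral.integral_congr hR.le
    intro z hz
    simp only
    rw [dec_trace h z (hne z hz), Finset.mul_sum]
  rw [e1, circleIntegral.integral_fun_sum]
  · have e2 : ∀ i : Fin n, ∮ z in C((c : ℂ), R), z ^ j * (z - (a i : ℂ))⁻¹ =
        if (i : ℕ) < k then 2 * Real.pi * Complex.I * (a i : ℂ) ^ j else 0 := by
      intro i
      split_ifs with hi
      · apply circ_in
        rw [mem_ball, dist_eq_norm, hn]
        exact hin i hi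
      · apply circ_out _ _ hR.le
        rw [mem_closedBall, dist_eq_norm, hn, not_le]
        exact hout i (by omega)
    simp only [e2]
    rw [← Finset.sum_filter]
    push_cast
    rw [Finset.mul_sum]
    rfl
  · intro i _
    apply ContinuousOn.circleIntegrable hR.le
    intro z hz
    have := hne z hz i
    have hd : DifferentiableAt ℂ (fun z => z ^ j * (z - (a i : ℂ))⁻¹) z := by
      fun_prop (disch := assumption)
    exact hd.continuousAt.continuousWithinAt


lemma ord_lower (f : ℝ → ℝ) (hf : AnalyticAt ℝ f 0) (C : ℝ) (m : ℕ)
    (h : ∀ᶠ t in 𝓝 (0:ℝ), |f t| ≤ C * |t| ^ m) : ∀ i < m, iteratedDeriv i f 0 = 0 := by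
  rw [← natCast_le_analyticOrderAt_iff_iteratedDeriv_eq_zero hf]
  by_contra hlt
  rw [not_le] at hlt
  obtain ⟨p, hp⟩ := ENat.ne_top_iff_exists.mp hlt.ne_top
  rw [← hp] at hlt
  have hpm : p < m := by exact_mod_cast hlt
  obtain ⟨F, hF, hF0, hFe⟩ := hf.analyticOrderAt_eq_natCast.mp hp.symm
  have h1 : ∀ᶠ t in 𝓝[≠] (0:ℝ), |F t| ≤ C * |t| ^ (m - p) := by
    filter_upwards [hFe.filter_mono nhdsWithin_le_nhds, h.filter_mono nhdsWithin_le_nhds,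
      self_mem_nhdsWithin] with t ht1 ht2 ht3
    have ht0 : 0 < |t| ^ p := pow_pos (abs_pos.mpr ht3) p
    rw [ht1, sub_zero, smul_eq_mul, abs_mul, abs_pow] at ht2
    have : |t| ^ m = |t| ^ p * |t| ^ (m - p) := by rw [← pow_add]; congr 1; omega
    rw [this] at ht2
    refine le_of_mul_le_mul_left ?_ ht0
    linarith
  have h2 : Tendsto (fun t => |F t|) (𝓝[≠] (0:ℝ)) (𝓝 |F 0|) :=
    (hF.continuousAt.abs.tendsto).mono_left nhdsWithin_le_nhds
  have h3 : Tendsto (fun t : ℝ => C * |t| ^ (m - p)) (𝓝[≠] (0:ℝ)) (𝓝 0) := by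
    have : Continuous (fun t : ℝ => C * |t| ^ (m - p)) := by fun_prop
    have h4 := this.tendsto 0
    have : m - p ≠ 0 := by omega
    simp [this] at h4
    exact h4.mono_left nhdsWithin_le_nhds
  have := le_of_tendsto_of_tendsto h2 h3 h1
  exact hF0 (abs_nonpos_iff.mp this)

lemma ord_upper (f : ℝ → ℝ) (hf : AnalyticAt ℝ f 0) (c : ℝ) (hc : 0 < c) (m : ℕ)
    (h : ∀ᶠ t in 𝓝 (0:ℝ), c * |t| ^ m ≤ |f t|) (h0 : ∀ i < m, iteratedDeriv i f 0 = 0) :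
    iteratedDeriv m f 0 ≠ 0 := by
  intro hm
  have h1 : ∀ i < m + 1, iteratedDeriv i f 0 = 0 := by
    intro i hi
    rcases Nat.lt_succ_iff_lt_or_eq.mp hi with h | h
    · exact h0 i h
    · rw [h]; exact hm
  rw [← natCast_le_analyticOrderAt_iff_iteratedDeriv_eq_zero hf,
    natCast_le_analyticOrderAt hf] at h1
  obtain ⟨F, hF, hFe⟩ := h1
  have h2 : ∀ᶠ t in 𝓝[≠] (0:ℝ), c ≤ |t * F t| := by
    filter_upwards [hFe.filter_mono nhdsWithin_le_nhds, h.filter_mono nhdsWithin_le_nhds,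
      self_mem_nhdsWithin] with t ht1 ht2 ht3
    have ht0 : 0 < |t| ^ m := pow_pos (abs_pos.mpr ht3) m
    rw [ht1, sub_zero, smul_eq_mul, abs_mul, abs_pow, pow_succ] at ht2
    refine le_of_mul_le_mul_left ?_ ht0
    rw [abs_mul]
    linarith
  have h3 : Tendsto (fun t => |t * F t|) (𝓝[≠] (0:ℝ)) (𝓝 0) := by
    have : Tendsto (fun t => |t * F t|) (𝓝 (0:ℝ)) (𝓝 |0 * F 0|) :=
      (continuousAt_id.mul hF.continuousAt).abs.tendsto
    rw [zero_mul, abs_zero] at this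
    exact this.mono_left nhdsWithin_le_nhds
  have := ge_of_tendsto h3 h2
  linarith

lemma ord0_ge (f : ℝ → ℝ) (m : ℕ) (h : ∀ i < m, iteratedDeriv i f 0 = 0) : (m : ℕ∞) ≤ ord0 f := by
  unfold ord0
  apply le_sInf
  rintro _ ⟨j, rfl, hj⟩
  by_contra hlt
  rw [not_le] at hlt
  exact hj (h j (by exact_mod_cast hlt))

lemma ord0_eq (f : ℝ → ℝ) (m : ℕ) (h : ∀ i < m, iteratedDeriv i f 0 = 0)
    (hm : iteratedDeriv m f 0 ≠ 0) : ord0 f = m :=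
  le_antisymm (sInf_le ⟨m, rfl, hm⟩) (ord0_ge f m h)

section est
variable {n k : ℕ} {l : Fin n → ℝ} {H₁ U : Matrix (Fin n) (Fin n) ℂ} {t : ℝ} {a : Fin n → ℝ}

lemma Dec.norm_le {H U : Matrix (Fin n) (Fin n) ℂ} (h : Dec H U a) (i j : Fin n) :
    ‖U i j‖ ≤ 1 := by
  have h1 := unitary_row U h.uu' i
  have h2 : ‖U i j‖ ^ 2 ≤ ∑ j, ‖U i j‖ ^ 2 :=
    Finset.single_le_sum (f := fun j => ‖U i j‖ ^ 2) (fun _ _ => by positivity) (Finset.mem_univ j)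
  rw [h1] at h2
  exact (sq_le_one_iff₀ (norm_nonneg _)).mp h2

lemma comp_eq (h : Dec (Matrix.diagonal (fun i => (l i : ℂ)) + t • H₁) U a) (i s : Fin n) :
    ((a s : ℂ) - l i) * U i s = t * ∑ b, H₁ i b * U b s := by
  have h1 : (Matrix.diagonal (fun i => (l i : ℂ)) + t • H₁) * U =
      U * Matrix.diagonal (fun i => (a i : ℂ)) := by
    conv_lhs => rw [h.eq]
    rw [Matrix.mul_assoc, h.uu, Matrix.mul_one]
  have h2 := congrFun (congrFun h1 i) s
  rw [Matrix.add_mul, Matrix.add_apply, Matrix.diagonal_mul, Matrix.mul_diagonal, Matrix.smul_mul,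
    Matrix.smul_apply, Matrix.mul_apply, Complex.real_smul] at h2
  linear_combination -h2

lemma row_le {B : ℝ} (hB : ∑ a, ∑ b, ‖H₁ a b‖ ≤ B) (i : Fin n) : ∑ b, ‖H₁ i b‖ ≤ B :=
  (Finset.single_le_sum (f := fun i => ∑ b, ‖H₁ i b‖)
    (fun _ _ => by positivity) (Finset.mem_univ i)).trans hB

lemma comp_le {B : ℝ} (hB : ∑ a, ∑ b, ‖H₁ a b‖ ≤ B)
    (h : Dec (Matrix.diagonal (fun i => (l i : ℂ)) + t • H₁) U a) (i s : Fin n) :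
    |a s - l i| * ‖U i s‖ ≤ |t| * B := by
  have h1 := congrArg norm (comp_eq h i s)
  rw [← Complex.ofReal_sub, norm_mul, norm_mul, Complex.norm_real, Complex.norm_real,
    Real.norm_eq_abs, Real.norm_eq_abs] at h1
  rw [h1]
  refine mul_le_mul_of_nonneg_left ?_ (abs_nonneg t)
  refine (norm_sum_le _ _).trans (le_trans ?_ (row_le hB i))
  refine Finset.sum_le_sum fun b _ => ?_
  rw [norm_mul]
  exact mul_le_of_le_one_right (norm_nonneg _) (h.norm_le b s)

lemma dec_diag (l : Fin n → ℝ) : Dec (Matrix.diagonal (fun i => (l i : ℂ))) 1 l :=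
  ⟨by simp, by simp⟩

lemma eig_close {B : ℝ} (hB0 : 0 ≤ B) (hB : frobSq H₁ ≤ B ^ 2) (hl : Monotone l) (ha : Monotone a)
    (h : Dec (Matrix.diagonal (fun i => (l i : ℂ)) + t • H₁) U a) (i : Fin n) :
    |a i - l i| ≤ |t| * B := by
  have h1 := hoffman_wielandt h (dec_diag l) ha hl
  have h2 : frobSq (Matrix.diagonal (fun i => (l i : ℂ)) + t • H₁ -
      Matrix.diagonal (fun i => (l i : ℂ))) = t ^ 2 * frobSq H₁ := by
    rw [add_sub_cancel_left]
    unfold frobSq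
    simp only [Finset.mul_sum]
    refine Finset.sum_congr rfl fun a _ => Finset.sum_congr rfl fun b _ => ?_
    rw [Matrix.smul_apply, norm_smul, mul_pow, Real.norm_eq_abs, sq_abs]
  rw [h2] at h1
  have h3 : (a i - l i) ^ 2 ≤ ∑ i, (a i - l i) ^ 2 :=
    Finset.single_le_sum (f := fun i => (a i - l i) ^ 2) (fun _ _ => by positivity)
      (Finset.mem_univ i)
  apply abs_le_of_sq_le_sq (h := ?_) (by positivity)
  rw [mul_pow, sq_abs]
  have := mul_le_mul_of_nonneg_left hB (sq_nonneg t)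
  linarith

/-- common situation at a small parameter -/
structure Sit (k : ℕ) (l : Fin n → ℝ) (H₁ U : Matrix (Fin n) (Fin n) ℂ) (t : ℝ) (a : Fin n → ℝ)
    (c δ B : ℝ) : Prop where
  dec : Dec (Matrix.diagonal (fun i => (l i : ℂ)) + t • H₁) U a
  hδ : 0 < δ
  hB0 : 0 ≤ B
  hB : ∑ a, ∑ b, ‖H₁ a b‖ ≤ B
  lo : ∀ i : Fin n, (i : ℕ) < k → l i = c
  hi : ∀ i : Fin n, k ≤ (i : ℕ) → c + δ ≤ l i
  cl : ∀ i, |a i - l i| ≤ |t| * B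
  sm : |t| * B ≤ δ / 4

lemma Sit.off {c δ B : ℝ} (S : Sit k l H₁ U t a c δ B) (i s : Fin n)
    (h : ((i : ℕ) < k ∧ k ≤ (s : ℕ)) ∨ (k ≤ (i : ℕ) ∧ (s : ℕ) < k)) :
    ‖U i s‖ ≤ |t| * (2 * B / δ) := by
  have h1 := comp_le S.hB S.dec i s
  have hδ := S.hδ
  have h2 : δ / 2 ≤ |a s - l i| := by
    have h3 := abs_le.mp ((S.cl s).trans S.sm)
    rcases h with ⟨h4, h5⟩ | ⟨h4, h5⟩
    · have := S.lo i h4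
      have := S.hi s h5
      refine le_trans ?_ (le_abs_self _)
      linarith [h3.1]
    · have := S.lo s h5
      have := S.hi i h4
      refine le_trans ?_ (neg_le_abs _)
      linarith [h3.2]
  have h3 := (mul_le_mul_of_nonneg_right h2 (norm_nonneg (U i s))).trans h1
  have e : |t| * (2 * B / δ) = |t| * B / (δ / 2) := by field_simp
  rw [e, le_div_iff₀ (by positivity)]
  linarith

lemma Sit.tangent {c δ B γ : ℝ} (S : Sit k l H₁ U t a c δ B) (hk : 0 < k) (hkn : k < n)
    (hγ : ∀ a b : Fin n, (a : ℕ) < k → (b : ℕ) < k → H₁ a b = if a = b then (γ : ℂ) else 0)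
    (hsm : n * (|t| * (2 * B / δ)) ^ 2 ≤ 1 / 2) :
    spread k a ≤ (n * (2 * (n * (B * (2 * B / δ)) ^ 2))) * |t| ^ 4 := by
  have hδ := S.hδ
  have hB0 := S.hB0
  set K := 2 * B / δ with hK
  have hK0 : 0 ≤ K := by positivity
  have step : ∀ s : Fin n, (s : ℕ) < k → (a s - (c + t * γ)) ^ 2 ≤ 2 * (n * (|t| * (B * (|t| * K))) ^ 2) := by
    intro s hs
    have h1 : ∀ i : Fin n, (i : ℕ) < k → |a s - (c + t * γ)| * ‖U i s‖ ≤ |t| * (B * (|t| * K)) := by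
      intro i hi
      have h2 := comp_eq S.dec i s
      have h3 : ((a s - (c + t * γ) : ℝ) : ℂ) * U i s =
          t * ∑ b : Fin n, if k ≤ (b : ℕ) then H₁ i b * U b s else 0 := by
        have h4 : ∑ b, H₁ i b * U b s =
            γ * U i s + ∑ b : Fin n, if k ≤ (b : ℕ) then H₁ i b * U b s else 0 := by
          have h5 : (γ : ℂ) * U i s = ∑ b, if b = i then (γ : ℂ) * U i s else 0 := by simp
          rw [h5, ← Finset.sum_add_distrib]
          refine Finset.sum_congr rfl fun b _ => ?_
          by_cases hb : (b : ℕ) < k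
          · rw [hγ i b hi hb, if_neg (by omega : ¬ k ≤ (b : ℕ))]
            by_cases hbi : b = i
            · subst hbi; simp
            · simp [hbi, Ne.symm hbi]
          · have : b ≠ i := by rintro rfl; exact hb hi
            simp [this, not_lt.mp hb]
        rw [h4, S.lo i hi] at h2
        push_cast
        linear_combination h2
      have h6 := congrArg norm h3
      rw [norm_mul, norm_mul, Complex.norm_real, Complex.norm_real,
        Real.norm_eq_abs, Real.norm_eq_abs] at h6
      rw [h6]
      refine mul_le_mul_of_nonneg_left ?_ (abs_nonneg t)
      refine (norm_sum_le _ _).trans ?_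
      refine le_trans ?_ (mul_le_mul_of_nonneg_right (row_le S.hB i) (by positivity))
      rw [Finset.sum_mul]
      refine Finset.sum_le_sum fun b _ => ?_
      split_ifs with hb
      · rw [norm_mul]
        exact mul_le_mul_of_nonneg_left (S.off b s (Or.inr ⟨hb, hs⟩)) (norm_nonneg _)
      · simp only [norm_zero]; positivity
    have h7 := unitary_col U S.dec.uu s
    rw [← Finset.sum_filter_add_sum_filter_not Finset.univ (fun i : Fin n => (i : ℕ) < k)] at h7
    have h8 : ∑ i with ¬ ((i : Fin n) : ℕ) < k, ‖U i s‖ ^ 2 ≤ n * (|t| * K) ^ 2 := by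
      refine (Finset.sum_le_card_nsmul _ _ ((|t| * K) ^ 2) ?_).trans ?_
      · intro i hi
        simp at hi
        exact pow_le_pow_left₀ (norm_nonneg _) (S.off i s (Or.inr ⟨hi, hs⟩)) 2
      · rw [nsmul_eq_mul]
        refine mul_le_mul_of_nonneg_right ?_ (by positivity)
        have := Finset.card_filter_le (Finset.univ : Finset (Fin n)) (fun i => ¬ (i : ℕ) < k)
        simp only [Finset.card_univ, Fintype.card_fin] at this
        exact_mod_cast this
    have h9 : ∑ i with ((i : Fin n) : ℕ) < k, (a s - (c + t * γ)) ^ 2 * ‖U i s‖ ^ 2 ≤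
        n * (|t| * (B * (|t| * K))) ^ 2 := by
      refine (Finset.sum_le_card_nsmul _ _ ((|t| * (B * (|t| * K))) ^ 2) ?_).trans ?_
      · intro i hi
        simp at hi
        have := pow_le_pow_left₀ (by positivity) (h1 i hi) 2
        rwa [mul_pow, sq_abs] at this
      · rw [nsmul_eq_mul]
        refine mul_le_mul_of_nonneg_right ?_ (by positivity)
        have := Finset.card_filter_le (Finset.univ : Finset (Fin n)) (fun i => (i : ℕ) < k)
        simp only [Finset.card_univ, Fintype.card_fin] at this
        exact_mod_cast this
    rw [← Finset.mul_sum] at h9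
    have h10 : 1 / 2 ≤ ∑ i with ((i : Fin n) : ℕ) < k, ‖U i s‖ ^ 2 := by linarith
    have h11 := mul_le_mul_of_nonneg_left h10 (sq_nonneg (a s - (c + t * γ)))
    linarith
  refine (spread_le hk hkn a (c + t * γ)).trans ?_
  refine (Finset.sum_le_card_nsmul _ _ _ (fun s hs => step s (mem_lowS.mp hs))).trans ?_
  rw [lowS_card hkn, nsmul_eq_mul]
  have hkn' : (k : ℝ) ≤ n := by exact_mod_cast hkn.le
  refine (mul_le_mul_of_nonneg_right hkn' (by positivity)).trans ?_
  apply le_of_eq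
  ring

lemma Sit.generic {c δ B : ℝ} (S : Sit k l H₁ U t a c δ B) (hk : 0 < k) (hkn : k < n) :
    spread k a ≤ (k * B ^ 2) * |t| ^ 2 := by
  refine (spread_le hk hkn a c).trans ?_
  refine (Finset.sum_le_card_nsmul _ _ ((|t| * B) ^ 2) (fun s hs => ?_)).trans ?_
  · have := S.cl s
    rw [S.lo s (mem_lowS.mp hs)] at this
    rw [← sq_abs]
    exact pow_le_pow_left₀ (abs_nonneg _) this 2
  · rw [lowS_card hkn, nsmul_eq_mul]
    apply le_of_eq
    ring

lemma Sit.block {c δ B : ℝ} (S : Sit k l H₁ U t a c δ B) (hk : 0 < k) (hkn : k < n)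
    (i j : Fin n) (hi : (i : ℕ) < k) (hj : (j : ℕ) < k) :
    ‖(if i = j then ((c - mean k a : ℝ) : ℂ) else 0) + t * H₁ i j‖ ≤
      n * Real.sqrt (spread k a) +
      n * ((∑ s, |l s - c| + δ) * (2 * B / δ) ^ 2) * |t| ^ 2 := by
  have hδ := S.hδ
  have hB0 := S.hB0
  set m := mean k a with hm
  set q := Real.sqrt (spread k a) with hq
  set K := 2 * B / δ with hK
  set M := ∑ s, |l s - c| + δ with hM
  have hK0 : 0 ≤ K := by positivity
  have hM0 : 0 ≤ M := by positivity
  have hlow : ∀ s : Fin n, (s : ℕ) < k → |a s - m| ≤ q := by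
    intro s hs
    apply Real.le_sqrt_of_sq_le
    rw [sq_abs, spread_mean hk hkn]
    exact Finset.single_le_sum (f := fun s => (a s - mean k a) ^ 2) (fun _ _ => by positivity)
      (mem_lowS.mpr hs)
  have hmc : |m - c| ≤ δ / 4 := by
    have h1 : m - c = (∑ i ∈ lowS n k, (a i - c)) / k := by
      rw [hm, mean, Finset.sum_sub_distrib, Finset.sum_const, lowS_card hkn, nsmul_eq_mul]
      have : (k : ℝ) ≠ 0 := by positivity
      field_simp
    rw [h1, abs_div, Nat.abs_cast, div_le_iff₀ (by positivity)]
    refine (Finset.abs_sum_le_sum_abs _ _).trans ?_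
    refine (Finset.sum_le_card_nsmul _ _ (δ / 4) (fun s hs => ?_)).trans ?_
    · have := (S.cl s).trans S.sm
      rwa [S.lo s (mem_lowS.mp hs)] at this
    · rw [lowS_card hkn, nsmul_eq_mul, mul_comm]
  have hhigh : ∀ s : Fin n, |a s - m| ≤ M := by
    intro s
    have h1 := (S.cl s).trans S.sm
    have h2 : |l s - c| ≤ ∑ s, |l s - c| :=
      Finset.single_le_sum (f := fun s => |l s - c|) (fun _ _ => abs_nonneg _) (Finset.mem_univ s)
    have e : a s - m = (a s - l s) + (l s - c) + (c - m) := by ring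
    rw [e]
    rw [abs_sub_comm] at hmc
    have := abs_add_three (a s - l s) (l s - c) (c - m)
    linarith
  have key : (if i = j then ((c - m : ℝ) : ℂ) else 0) + t * H₁ i j =
      ∑ s, ((a s - m : ℝ) : ℂ) * (U i s * star (U j s)) := by
    have h1 := congrFun (congrFun S.dec.eq i) j
    rw [Matrix.add_apply, Matrix.smul_apply, Complex.real_smul, Matrix.mul_apply] at h1
    simp only [Matrix.mul_diagonal, Matrix.conjTranspose_apply] at h1
    have h2 := congrFun (congrFun S.dec.uu' i) j
    rw [Matrix.mul_apply] at h2
    simp only [Matrix.conjTranspose_apply] at h2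
    have h3 : ∑ s, ((a s - m : ℝ) : ℂ) * (U i s * star (U j s)) =
        ∑ s, U i s * (a s : ℂ) * star (U j s) - m * ∑ s, U i s * star (U j s) := by
      rw [Finset.mul_sum, ← Finset.sum_sub_distrib]
      refine Finset.sum_congr rfl fun s _ => ?_
      push_cast; ring
    rw [h3, ← h1, h2, Matrix.diagonal_apply, Matrix.one_apply, S.lo i hi]
    split_ifs <;> push_cast <;> ring
  rw [key]
  refine (norm_sum_le _ _).trans ?_
  have hterm : ∀ s : Fin n, ‖((a s - m : ℝ) : ℂ) * (U i s * star (U j s))‖ ≤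
      q + M * K ^ 2 * |t| ^ 2 := by
    intro s
    rw [norm_mul, norm_mul, norm_star, Complex.norm_real, Real.norm_eq_abs]
    by_cases hs : (s : ℕ) < k
    · have h1 : ‖U i s‖ * ‖U j s‖ ≤ 1 :=
        mul_le_one₀ (S.dec.norm_le i s) (norm_nonneg _) (S.dec.norm_le j s)
      have h2 := mul_le_mul (hlow s hs) h1 (by positivity) (Real.sqrt_nonneg _)
      have : 0 ≤ M * K ^ 2 * |t| ^ 2 := by positivity
      linarith
    · have h1 : ‖U i s‖ * ‖U j s‖ ≤ (|t| * K) * (|t| * K) :=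
        mul_le_mul (S.off i s (Or.inl ⟨hi, by omega⟩)) (S.off j s (Or.inl ⟨hj, by omega⟩))
          (norm_nonneg _) (by positivity)
      have h2 := mul_le_mul (hhigh s) h1 (by positivity) hM0
      have : 0 ≤ q := Real.sqrt_nonneg _
      have e : M * (|t| * K * (|t| * K)) = M * K ^ 2 * |t| ^ 2 := by ring
      linarith
  refine (Finset.sum_le_card_nsmul _ _ _ (fun s _ => hterm s)).trans ?_
  rw [Finset.card_univ, Fintype.card_fin, nsmul_eq_mul]
  apply le_of_eq
  ring

end est

lemma nontangent_gap {n k : ℕ} (hk : 0 < k) (hkn : k < n) (H₁ : Matrix (Fin n) (Fin n) ℂ)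
    (hH₁ : H₁.IsHermitian)
    (h : ¬ (∃ c : ℝ, ∀ a b : Fin n, (a : ℕ) < k → (b : ℕ) < k →
        H₁ a b = if a = b then (c : ℂ) else 0)) :
    ∃ γ > 0, ∀ (C x : ℝ) (t : ℝ), (∀ i j : Fin n, (i : ℕ) < k → (j : ℕ) < k →
      ‖(if i = j then (x : ℂ) else 0) + t * H₁ i j‖ ≤ C) → γ * |t| ≤ 2 * C := by
  by_cases hoff : ∃ i j : Fin n, (i : ℕ) < k ∧ (j : ℕ) < k ∧ i ≠ j ∧ H₁ i j ≠ 0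
  · obtain ⟨i, j, hi, hj, hij, hne⟩ := hoff
    refine ⟨‖H₁ i j‖, norm_pos_iff.mpr hne, fun C x t hC => ?_⟩
    have := hC i j hi hj
    rw [if_neg hij, zero_add, norm_mul, Complex.norm_real, Real.norm_eq_abs] at this
    have h0 : 0 ≤ |t| * ‖H₁ i j‖ := by positivity
    linarith
  · push Not at hoff
    set o : Fin n := ⟨0, by omega⟩ with ho
    have : ∃ i : Fin n, (i : ℕ) < k ∧ H₁ i i ≠ H₁ o o := by
      by_contra hall
      push Not at hall
      apply h
      refine ⟨(H₁ o o).re, fun a b ha hb => ?_⟩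
      split_ifs with hab
      · subst hab
        rw [hall a ha]
        exact (hH₁.coe_re_apply_self o).symm
      · exact hoff a b ha hb hab
    obtain ⟨i, hi, hne⟩ := this
    refine ⟨‖H₁ i i - H₁ o o‖, norm_pos_iff.mpr (sub_ne_zero.mpr hne), fun C x t hC => ?_⟩
    have h1 := hC i i hi hi
    have h2 := hC o o hk hk
    rw [if_pos rfl] at h1 h2
    have e : (t : ℂ) * (H₁ i i - H₁ o o) = (x + t * H₁ i i) - (x + t * H₁ o o) := by ring
    have h3 := congrArg norm e
    rw [norm_mul, Complex.norm_real, Real.norm_eq_abs] at h3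
    have h4 := norm_sub_le ((x : ℂ) + t * H₁ i i) (x + t * H₁ o o)
    linarith

lemma analytic_part {n : ℕ} (H₀ H₁ : Matrix (Fin n) (Fin n) ℂ) (c : ℂ) (R ε : ℝ) (hR : 0 ≤ R)
    (h : ∀ t ∈ ball (0:ℂ) ε, ∀ z ∈ sphere c R, (resM H₀ H₁ (t, z)).det ≠ 0) (j : ℕ) :
    ∀ t ∈ Set.Ioo (-ε) ε, AnalyticAt ℝ (fun t : ℝ => ((2 * Real.pi * Complex.I)⁻¹ *
      ∮ z in C(c, R), z ^ j * ((resM H₀ H₁ ((t : ℂ), z))⁻¹).trace).re) t := by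
  intro t ht
  have hd := param_circle (fun p => p.2 ^ j * ((resM H₀ H₁ p)⁻¹).trace) c R ε hR
    (fun t ht z hz => (analyticAt_snd.pow j).mul (resM_trace_an H₀ H₁ (t, z) (h t ht z hz)))
  have htb : (t : ℂ) ∈ ball (0:ℂ) ε := by
    rw [mem_ball_zero_iff, Complex.norm_real, Real.norm_eq_abs]
    exact abs_lt.mpr ht
  have ha := (analyticAt_const (v := (2 * Real.pi * Complex.I)⁻¹)).mul
    (hd.analyticAt (isOpen_ball.mem_nhds htb))
  have ha' := ha.restrictScalars (𝕜 := ℝ)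
  have h1 : AnalyticAt ℝ (fun t : ℝ => (t : ℂ)) t := Complex.ofRealCLM.analyticAt t
  have h2 := ha'.comp_of_eq h1 rfl
  exact (Complex.reCLM.analyticAt _).comp h2

theorem main_aux {n k : ℕ} (hk2 : 2 ≤ k) (hkn : k < n)
    (l : Fin n → ℝ) (hmono : Monotone l)
    (hdeg : ∀ i j : Fin n, (i : ℕ) < k → (j : ℕ) < k → l i = l j)
    (hgap : ∀ i j : Fin n, (i : ℕ) < k → (j : ℕ) = k → l i < l j)
    (H₁ : Matrix (Fin n) (Fin n) ℂ) (hH₁ : H₁.IsHermitian) (g : ℝ → ℝ)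
    (hg : g = (fun t : ℝ => (sInf ((fun G =>
        frobNorm (Matrix.diagonal (fun i => (l i : ℂ)) + t • H₁ - G)) '' SigmaSet n k)) ^ 2)) :
    (∃ ε > 0, AnalyticOnNhd ℝ g (Set.Ioo (-ε) ε)) ∧
    ((∃ c : ℝ, ∀ a b : Fin n, (a : ℕ) < k → (b : ℕ) < k →
        H₁ a b = if a = b then (c : ℂ) else 0) → (4 : ℕ∞) ≤ ord0 g) ∧
    (¬ (∃ c : ℝ, ∀ a b : Fin n, (a : ℕ) < k → (b : ℕ) < k →
        H₁ a b = if a = b then (c : ℂ) else 0) → ord0 g = (2 : ℕ∞)) := by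
  have hk : 0 < k := by omega
  set H₀ := Matrix.diagonal (fun i => (l i : ℂ)) with hH₀
  set c := l ⟨0, by omega⟩ with hc
  set δ := l ⟨k, hkn⟩ - c with hδd
  have hδ : 0 < δ := sub_pos.mpr (hgap _ _ hk rfl)
  set B := ∑ a, ∑ b, ‖H₁ a b‖ + Real.sqrt (frobSq H₁) + 1 with hBd
  have hS0 : 0 ≤ ∑ a, ∑ b, ‖H₁ a b‖ := by positivity
  have hq0 := Real.sqrt_nonneg (frobSq H₁)
  have hB0 : 0 < B := by positivity
  have hB1 : ∑ a, ∑ b, ‖H₁ a b‖ ≤ B := by linarith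
  have hB2 : frobSq H₁ ≤ B ^ 2 := by
    rw [← Real.sq_sqrt (show 0 ≤ frobSq H₁ by unfold frobSq; positivity)]
    exact pow_le_pow_left₀ hq0 (by linarith) 2
  have hherm : ∀ t : ℝ, (H₀ + t • H₁).IsHermitian := fun t =>
    (dec_diag l).herm.add (hH₁.smul (IsSelfAdjoint.all t))
  have hlo : ∀ i : Fin n, (i : ℕ) < k → l i = c := fun i hi => hdeg _ _ hi hk
  have hhi : ∀ i : Fin n, k ≤ (i : ℕ) → c + δ ≤ l i := fun i hi => by
    have : l ⟨k, hkn⟩ ≤ l i := hmono hi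
    linarith
  have hsit : ∀ t : ℝ, |t| * B ≤ δ / 4 → ∃ U, Sit k l H₁ U t (eigs (H₀ + t • H₁)) c δ B := by
    intro t ht
    obtain ⟨U, hU⟩ := exists_dec _ (hherm t)
    exact ⟨U, hU, hδ, hB0.le, hB1, hlo, hhi,
      fun i => eig_close hB0.le hB2 hmono (eigs_mono _) hU i, ht⟩
  have hgs : ∀ t : ℝ, |t| * B ≤ δ / 4 → g t = spread k (eigs (H₀ + t • H₁)) := by
    intro t ht
    obtain ⟨U, S⟩ := hsit t ht
    rw [hg]
    refine dist_eq hk hkn _ (hherm t) fun i j hi hj => ?_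
    have h1 := abs_le.mp ((S.cl i).trans S.sm)
    have h2 := abs_le.mp ((S.cl j).trans S.sm)
    have h3 := S.lo i hi
    have h4 := S.hi j hj.ge
    linarith [h1.2, h2.1]
  have hspread0 : ∀ a : Fin n → ℝ, 0 ≤ spread k a := fun a => by
    rw [spread_mean hk hkn]; positivity
  -- smallness
  have hsmall : ∀ᶠ t in 𝓝 (0:ℝ), |t| * B ≤ δ / 4 := by
    have : Continuous fun t : ℝ => |t| * B := by fun_prop
    have h1 := this.tendsto 0
    simp only [abs_zero, zero_mul] at h1
    exact (h1.eventually (gt_mem_nhds (by positivity : (0:ℝ) < δ / 4))).mono fun t ht => le_of_lt ht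
  -- analyticity
  have han : ∃ ε > 0, AnalyticOnNhd ℝ g (Set.Ioo (-ε) ε) := by
    obtain ⟨ε1, hε1, hdet⟩ := exists_radius H₀ H₁ (c : ℂ) (δ / 2) (by
      intro z hz
      have e : resM H₀ H₁ (0, z) = Matrix.diagonal (fun i => z - (l i : ℂ)) := by
        ext i j
        by_cases hij : i = j
        · subst hij; simp [resM, hH₀]
        · simp [resM, hH₀, hij]
      rw [e, Matrix.det_diagonal, Finset.prod_ne_zero_iff]
      intro i _ h0
      rw [sub_eq_zero] at h0
      rw [mem_sphere, dist_eq_norm, h0, ← Complex.ofReal_sub, Complex.norm_real,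
        Real.norm_eq_abs] at hz
      rcases lt_or_ge (i : ℕ) k with hi | hi
      · rw [hlo i hi] at hz
        rw [sub_self, abs_zero] at hz
        linarith
      · have := hhi i hi
        rw [abs_of_nonneg (by linarith)] at hz
        linarith)
    refine ⟨min ε1 (δ / 4 / B), by positivity, ?_⟩
    set ε := min ε1 (δ / 4 / B) with hε
    have hdet' : ∀ t ∈ ball (0:ℂ) ε, ∀ z ∈ sphere (c : ℂ) (δ / 2), (resM H₀ H₁ (t, z)).det ≠ 0 :=
      fun t ht => hdet t (ball_subset_ball (min_le_left _ _) ht)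
    have hP := analytic_part H₀ H₁ (c : ℂ) (δ / 2) ε (by positivity) hdet'
    have hPe : ∀ j : ℕ, ∀ t ∈ Set.Ioo (-ε) ε, ((2 * Real.pi * Complex.I)⁻¹ *
        ∮ z in C((c : ℂ), δ / 2), z ^ j * ((resM H₀ H₁ ((t : ℂ), z))⁻¹).trace).re =
        ∑ i ∈ lowS n k, eigs (H₀ + t • H₁) i ^ j := by
      intro j t ht
      have ht' : |t| * B ≤ δ / 4 := by
        have h1 : |t| < δ / 4 / B := (abs_lt.mpr ht).trans_le (min_le_right _ _)
        rw [lt_div_iff₀ hB0] at h1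
        exact h1.le
      obtain ⟨U, S⟩ := hsit t ht'
      have h1 := power_sum (k := k) S.dec c (δ / 2) (by positivity) (by
        intro i hi
        have h1 := (S.cl i).trans S.sm
        rw [S.lo i hi] at h1
        linarith) (by
        intro i hi
        have h1 := abs_le.mp ((S.cl i).trans S.sm)
        have h2 := S.hi i hi
        refine lt_of_lt_of_le ?_ (le_abs_self _)
        linarith [h1.1]) j
      have e : ∀ z : ℂ, resM H₀ H₁ ((t : ℂ), z) = z • 1 - (H₀ + t • H₁) := by
        intro z
        simp only [resM]
        congr 2
      simp only [e]
      rw [h1, ← mul_assoc, inv_mul_cancel₀ Complex.two_pi_I_ne_zero, one_mul, Complex.ofReal_re]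
    intro t ht
    have hfin := (hP 2 t ht).sub (((hP 1 t ht).pow 2).div_const (c := (k : ℝ)))
    refine hfin.congr ?_
    filter_upwards [isOpen_Ioo.mem_nhds ht] with s hs
    have hs' : |s| * B ≤ δ / 4 := by
      have h1 : |s| < δ / 4 / B := (abs_lt.mpr hs).trans_le (min_le_right _ _)
      rw [lt_div_iff₀ hB0] at h1
      exact h1.le
    have e1 := hPe 1 s hs
    have e2 := hPe 2 s hs
    simp only [Pi.sub_apply, Pi.pow_apply]
    rw [e1, e2, hgs s hs', spread]
    simp
  have hg0 : AnalyticAt ℝ g 0 := by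
    obtain ⟨ε, hε, h⟩ := han
    exact h 0 ⟨by linarith, hε⟩
  refine ⟨han, ?_, ?_⟩
  · rintro ⟨γ, hγ⟩
    apply ord0_ge g 4
    have hsm2 : ∀ᶠ t in 𝓝 (0:ℝ), n * (|t| * (2 * B / δ)) ^ 2 ≤ 1 / 2 := by
      have : Continuous fun t : ℝ => n * (|t| * (2 * B / δ)) ^ 2 := by fun_prop
      have h1 := this.tendsto 0
      simp only [abs_zero, zero_mul, ne_eq, OfNat.ofNat_ne_zero, not_false_eq_true, zero_pow,
        mul_zero] at h1
      exact (h1.eventually (gt_mem_nhds (by norm_num : (0:ℝ) < 1 / 2))).mono fun t ht => le_of_lt ht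
    apply ord_lower g hg0 (n * (2 * (n * (B * (2 * B / δ)) ^ 2))) 4
    filter_upwards [hsmall, hsm2] with t ht ht2
    obtain ⟨U, S⟩ := hsit t ht
    rw [hgs t ht, abs_of_nonneg (hspread0 _)]
    exact S.tangent hk hkn hγ ht2
  · intro hnt
    obtain ⟨γ, hγ, hγ'⟩ := nontangent_gap hk hkn H₁ hH₁ hnt
    have hlow : ∀ i < 2, iteratedDeriv i g 0 = 0 := by
      apply ord_lower g hg0 (k * B ^ 2) 2
      filter_upwards [hsmall] with t ht
      obtain ⟨U, S⟩ := hsit t ht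
      rw [hgs t ht, abs_of_nonneg (hspread0 _)]
      exact S.generic hk hkn
    apply ord0_eq g 2 hlow
    set D := n * ((∑ s, |l s - c| + δ) * (2 * B / δ) ^ 2) with hD
    have hn0 : (0:ℝ) < n := by
      have : 0 < n := by omega
      exact_mod_cast this
    have hsm3 : ∀ᶠ t in 𝓝 (0:ℝ), D * |t| ≤ γ / 4 := by
      have : Continuous fun t : ℝ => D * |t| := by fun_prop
      have h1 := this.tendsto 0
      simp only [abs_zero, mul_zero] at h1
      exact (h1.eventually (gt_mem_nhds (by positivity : (0:ℝ) < γ / 4))).mono fun t ht => le_of_lt ht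
    refine ord_upper g hg0 ((γ / (4 * n)) ^ 2) (by positivity) 2 ?_ hlow
    filter_upwards [hsmall, hsm3] with t ht ht3
    obtain ⟨U, S⟩ := hsit t ht
    rw [hgs t ht, abs_of_nonneg (hspread0 _)]
    have h1 := hγ' _ (c - mean k (eigs (H₀ + t • H₁))) t (fun i j hi hj => S.block hk hkn i j hi hj)
    rw [← hD] at h1
    have h2 := mul_le_mul_of_nonneg_right ht3 (abs_nonneg t)
    have h3 : γ / (4 * n) * |t| ≤ Real.sqrt (spread k (eigs (H₀ + t • H₁))) := by
      rw [div_mul_eq_mul_div, div_le_iff₀ (by positivity)]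
      nlinarith
    have h4 := pow_le_pow_left₀ (by positivity) h3 2
    rw [Real.sq_sqrt (hspread0 _), mul_pow] at h4
    exact h4


/-- **Order of energy splitting for a linear perturbation:** for a diagonal `H₀ ∈ Σ_k` and
Hermitian `H₁`, the function `g(t) = d(H₀ + t·H₁, Σ_k)²` is real-analytic near `0`; if the
upper-left `k × k` block of `H₁` is a real scalar matrix (i.e. `H₁` is tangent to `Σ_k` at
`H₀`) then `ord₀(g) ≥ 4`, otherwise `ord₀(g) = 2`. -/
theorem order_splitting_linear_family {n k : ℕ} (hk2 : 2 ≤ k) (hkn : k < n)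
    (l : Fin n → ℝ) (hmono : Monotone l)
    (hdeg : ∀ i j : Fin n, (i : ℕ) < k → (j : ℕ) < k → l i = l j)
    (hgap : ∀ i j : Fin n, (i : ℕ) < k → (j : ℕ) = k → l i < l j)
    (H₁ : Matrix (Fin n) (Fin n) ℂ) (hH₁ : H₁.IsHermitian) :
    (∃ ε > 0, AnalyticOnNhd ℝ
      (fun t : ℝ => (sInf ((fun G =>
        frobNorm (Matrix.diagonal (fun i => (l i : ℂ)) + t • H₁ - G)) '' SigmaSet n k)) ^ 2)
      (Set.Ioo (-ε) ε)) ∧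
    ((∃ c : ℝ, ∀ a b : Fin n, (a : ℕ) < k → (b : ℕ) < k →
        H₁ a b = if a = b then (c : ℂ) else 0) →
      (4 : ℕ∞) ≤ ord0 (fun t : ℝ => (sInf ((fun G =>
        frobNorm (Matrix.diagonal (fun i => (l i : ℂ)) + t • H₁ - G)) '' SigmaSet n k)) ^ 2)) ∧
    (¬ (∃ c : ℝ, ∀ a b : Fin n, (a : ℕ) < k → (b : ℕ) < k →
        H₁ a b = if a = b then (c : ℂ) else 0) →
      ord0 (fun t : ℝ => (sInf ((fun G =>
        frobNorm (Matrix.diagonal (fun i => (l i : ℂ)) + t • H₁ - G)) '' SigmaSet n k)) ^ 2)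
        = (2 : ℕ∞)) := by
  exact main_aux hk2 hkn l hmono hdeg hgap H₁ hH₁ _ rfl

end
end
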